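/- Let α ∈ ℝ, δ > 0, and let w : ℂ → ℂ be continuous and bounded on the vertical segment {α + iu : 0 ≤ u ≤ δ}. Then lim_{s → +∞} s · ∫₀^δ e^{−s² u / 2}·u^{−1/2}·w(α + iu) du = √(2π)·w(α). -/

import Mathlib

open Complex Filter

/-!
After multiplication by `s`, the weight `e^{-s²u/2} u^{-1/2}` equals `√(2π) · s² φ(s² u)`, where `φ`
is the density of the Gamma distribution of shape and rate `1/2` (the `χ²` distribution with one
degree of freedom). As `s² → ∞` these rescaled densities form an approximate identity at `0⁺`: their
mass on `(0, δ]` tends to `1`, and they tend to `0` uniformly on each `[η, ∞)` because `x φ(x) → 0`.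
-/

open MeasureTheory ProbabilityTheory Set Topology

section ApproximateIdentity

variable {φ : ℝ → ℝ} {δ η : ℝ}

lemma tendsto_intervalIntegral_mul_comp_mul_left (hφ : IntegrableOn φ (Ioi 0)) (hδ : 0 < δ) :
    Tendsto (fun c => ∫ x in (0 : ℝ)..δ, c * φ (c * x)) atTop (𝓝 (∫ x in Ioi 0, φ x)) := by
  have hlim := intervalIntegral_tendsto_integral_Ioi 0 hφ (tendsto_id.atTop_mul_const hδ)
  refine hlim.congr fun c => ?_
  simp [intervalIntegral.integral_const_mul]

lemma tendstoUniformlyOn_mul_comp_mul_left (hφ : Tendsto (fun x => x * φ x) atTop (𝓝 0))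
    (hη : 0 < η) :
    TendstoUniformlyOn (fun c x => c * φ (c * x)) 0 atTop (Ici η) := by
  refine Metric.tendstoUniformlyOn_iff.2 fun ε hε => ?_
  obtain ⟨R, hR⟩ := eventually_atTop.1 (Metric.tendsto_nhds.1 hφ (η * ε) (by positivity))
  filter_upwards [eventually_ge_atTop (R / η), eventually_ge_atTop 0] with c hcR hc x hx
  have hx0 : 0 < x := hη.trans_le hx
  have hRcx : R ≤ c * x := ((div_le_iff₀ hη).1 hcR).trans (mul_le_mul_of_nonneg_left hx hc)
  have hbound : x * |c * φ (c * x)| < x * ε := calc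
    x * |c * φ (c * x)| = |c * x * φ (c * x)| := by
      rw [show c * x * φ (c * x) = x * (c * φ (c * x)) by ring, abs_mul x, abs_of_pos hx0]
    _ < η * ε := by simpa using hR (c * x) hRcx
    _ ≤ x * ε := mul_le_mul_of_nonneg_right hx hε.le
  simpa using lt_of_mul_lt_mul_left hbound hx0.le

lemma tendsto_intervalIntegral_mul_comp_mul_left_smul
    {E : Type*} [NormedAddCommGroup E] [NormedSpace ℝ E] [CompleteSpace E] {f : ℝ → E} {y : E}
    (hφ_nonneg : ∀ x, 0 < x → 0 ≤ φ x) (hφ_one : ∫ x in Ioi 0, φ x = 1)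
    (hφ_decay : Tendsto (fun x => x * φ x) atTop (𝓝 0))
    (hδ : 0 < δ) (hf : IntervalIntegrable f volume 0 δ) (hfy : Tendsto f (𝓝[>] 0) (𝓝 y)) :
    Tendsto (fun c => ∫ x in (0 : ℝ)..δ, (c * φ (c * x)) • f x) atTop (𝓝 y) := by
  have hφ_int : IntegrableOn φ (Ioi 0) := integrable_of_integral_eq_one hφ_one
  simp only [intervalIntegral.integral_of_le hδ.le]
  refine tendsto_setIntegral_peak_smul_of_integrableOn_of_tendsto (x₀ := 0) measurableSet_Ioc
    measurableSet_Ioc Subset.rfl self_mem_nhdsWithin measure_Ioc_lt_top.ne ?nonneg ?uniform ?mass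
    ?measurable hf.1 (hfy.mono_left (nhdsWithin_mono 0 Ioc_subset_Ioi_self))
  case nonneg =>
    filter_upwards [eventually_gt_atTop 0] with c hc x hx
    exact mul_nonneg hc.le (hφ_nonneg _ (mul_pos hc hx.1))
  case uniform =>
    intro u hu h0u
    obtain ⟨η, hη, hηu⟩ := Metric.isOpen_iff.1 hu 0 h0u
    refine (tendstoUniformlyOn_mul_comp_mul_left hφ_decay hη).mono fun x ⟨hx, hxu⟩ => ?_
    by_contra hxη
    exact hxu (hηu (by simpa [abs_of_pos hx.1] using hxη))
  case mass =>
    simpa only [intervalIntegral.integral_of_le hδ.le, hφ_one] using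
      tendsto_intervalIntegral_mul_comp_mul_left hφ_int hδ
  case measurable =>
    filter_upwards [eventually_gt_atTop 0] with c hc
    have hscaled : IntegrableOn (fun x => φ (c * x)) (Ioi 0) :=
      (integrableOn_Ioi_comp_mul_left_iff φ 0 hc).2 (by simpa using hφ_int)
    exact ((hscaled.mono_set Ioc_subset_Ioi_self).const_mul c).aestronglyMeasurable

end ApproximateIdentity

section GammaDensity

variable {a r : ℝ}

lemma setIntegral_Ioi_gammaPDFReal (ha : 0 < a) (hr : 0 < r) :
    ∫ x in Ioi 0, gammaPDFReal a r x = 1 := calc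
  ∫ x in Ioi 0, gammaPDFReal a r x = ∫ x in Ici 0, gammaPDFReal a r x :=
    integral_Ici_eq_integral_Ioi.symm
  _ = ∫ x, gammaPDFReal a r x :=
    setIntegral_eq_integral_of_forall_compl_eq_zero fun _ hx => if_neg hx
  _ = (∫⁻ x, gammaPDF a r x).toReal :=
    integral_eq_lintegral_of_nonneg_ae (ae_of_all _ (gammaPDFReal_nonneg ha hr))
      (measurable_gammaPDFReal a r).aestronglyMeasurable
  _ = 1 := by simp [lintegral_gammaPDF_eq_one ha hr]

lemma tendsto_mul_gammaPDFReal_atTop (a : ℝ) (hr : 0 < r) :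
    Tendsto (fun x => x * gammaPDFReal a r x) atTop (𝓝 0) := by
  have hlim :=
    (tendsto_rpow_mul_exp_neg_mul_atTop_nhds_zero a r hr).const_mul (r ^ a / Real.Gamma a)
  rw [mul_zero] at hlim
  refine hlim.congr' ?_
  filter_upwards [eventually_gt_atTop 0] with x hx
  rw [gammaPDFReal, if_pos hx.le, Real.rpow_sub_one hx.ne']
  field_simp

lemma gammaPDFReal_half_half {x : ℝ} (hx : 0 ≤ x) :
    gammaPDFReal (1 / 2) (1 / 2) x = (√(2 * Real.pi))⁻¹ * (Real.exp (-x / 2) * (√x)⁻¹) := by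
  have hpow : x ^ ((1 / 2 : ℝ) - 1) = (√x)⁻¹ := by
    rw [Real.sqrt_eq_rpow, ← Real.rpow_neg hx]
    norm_num
  rw [gammaPDFReal, if_pos hx, hpow, Real.Gamma_one_half_eq, ← Real.sqrt_eq_rpow,
    Real.sqrt_mul zero_le_two, one_div, Real.sqrt_inv]
  ring_nf

end GammaDensity

lemma mul_exp_neg_sq_mul_inv_sqrt {s u : ℝ} (hs : 0 < s) (hu : 0 ≤ u) :
    s * (Real.exp (-s ^ 2 * u / 2) * (√u)⁻¹) =
      √(2 * Real.pi) * (s ^ 2 * gammaPDFReal (1 / 2) (1 / 2) (s ^ 2 * u)) := by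
  have hpi : √(2 * Real.pi) ≠ 0 := by positivity
  rw [gammaPDFReal_half_half (by positivity), Real.sqrt_mul (sq_nonneg s), Real.sqrt_sq hs.le,
    mul_inv]
  field_simp

theorem vertical_segment_asymptotics_sqrt_general
    {E : Type*} [NormedAddCommGroup E] [NormedSpace ℂ E] [CompleteSpace E] {δ : ℝ} (hδ : 0 < δ)
    {f : ℝ → E} {y : E} (hf : IntervalIntegrable f volume 0 δ) (hfy : Tendsto f (𝓝[>] 0) (𝓝 y)) :
    Tendsto (fun s : ℝ =>
        (s : ℂ) • ∫ u in (0 : ℝ)..δ,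
          (Complex.exp (-(s : ℂ) ^ 2 * (u : ℂ) / 2) * ((√u : ℝ) : ℂ)⁻¹) • f u)
      atTop (𝓝 (((√(2 * Real.pi) : ℝ) : ℂ) • y)) := by
  have hhalf : (0 : ℝ) < 1 / 2 := one_half_pos
  have hpeak := tendsto_intervalIntegral_mul_comp_mul_left_smul
    (fun x _ => gammaPDFReal_nonneg hhalf hhalf x)
    (setIntegral_Ioi_gammaPDFReal hhalf hhalf)
    (tendsto_mul_gammaPDFReal_atTop _ hhalf) hδ hf hfy
  refine ((hpeak.comp (tendsto_pow_atTop two_ne_zero)).const_smul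
    ((√(2 * Real.pi) : ℝ) : ℂ)).congr' ?_
  filter_upwards [eventually_gt_atTop 0] with s hs
  simp only [Function.comp_apply, ← intervalIntegral.integral_smul]
  refine intervalIntegral.integral_congr fun u hu => ?_
  rw [uIcc_of_le hδ.le] at hu
  have hweight := congrArg (fun t : ℝ => (t : ℂ)) (mul_exp_neg_sq_mul_inv_sqrt hs hu.1)
  push_cast at hweight
  simp only [smul_smul, hweight, ← Complex.coe_smul]
  push_cast
  rfl

/-- Asymptotics of the vertical-segment contribution for the square-root singularity:
`s·∫₀^δ e^{−s²u/2} u^{−1/2} w(α+iu) du → √(2π)·w(α)` as `s → +∞`, where `u^{−1/2}` is the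
inverse of the real positive square root. -/
theorem vertical_segment_asymptotics_sqrt
    (α δ : ℝ) (hδ : 0 < δ) (w : ℂ → ℂ)
    (hw : ContinuousOn w {c : ℂ | ∃ u ∈ Set.Icc (0 : ℝ) δ, c = (α : ℂ) + Complex.I * u})
    (hbdd : ∃ M : ℝ, ∀ c ∈ {c : ℂ | ∃ u ∈ Set.Icc (0 : ℝ) δ, c = (α : ℂ) + Complex.I * u},
      ‖w c‖ ≤ M) :
    Tendsto (fun s : ℝ =>
        (s : ℂ) *
          ∫ u in (0:ℝ)..δ, Complex.exp (-(s : ℂ) ^ 2 * (u : ℂ) / 2) *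
            ((Real.sqrt u : ℝ) : ℂ)⁻¹ * w ((α : ℂ) + Complex.I * u))
      atTop (nhds (((Real.sqrt (2 * Real.pi) : ℝ) : ℂ) * w (α : ℂ))) := by
  have hcont := hw.comp (f := fun u : ℝ => (α : ℂ) + Complex.I * u) (by fun_prop)
    fun u hu => ⟨u, hu, rfl⟩
  have hlim := (hcont 0 (left_mem_Icc.2 hδ.le)).mono_of_mem_nhdsWithin (Icc_mem_nhdsGT hδ)
  simpa using vertical_segment_asymptotics_sqrt_general hδ
    (hcont.intervalIntegrable_of_Icc hδ.le) hlim.tendsto
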